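/- Let μ be a Borel probability measure on 2^ℕ and suppose there exist p ∈ ℕ and infinitely many n with K(μ↾n) ≤ K(n) + p. Then μ is supported on its set of atoms, i.e., μ({Z ∈ 2^ℕ : μ({Z}) > 0}) = 1. In particular, every K-trivial measure is supported on its atoms. -/

import Mathlib

open MeasureTheory Filter

/-- Cantor space: the space of infinite binary sequences. -/
abbrev Cantor : Type := ℕ → Bool

/-- Finite binary strings. -/
abbrev BStr : Type := List Bool

/-- The cylinder set of sequences extending the string `x`. -/
def cyl (x : BStr) : Set Cantor := {Z | ∀ i : Fin x.length, Z i.1 = x.get i}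

/-- The string of the first `n` bits of `Z`. -/
def seg (Z : Cantor) (n : ℕ) : BStr := List.ofFn fun i : Fin n => Z i.1

/-- `lam` is the uniform (fair-coin product) measure: every cylinder `[x]`
has measure `2^{-|x|}`. -/
def IsUniform (lam : Measure Cantor) : Prop :=
  ∀ x : BStr, lam (cyl x) = (2 : ENNReal)⁻¹ ^ x.length

/-- `(G_m)` is a Martin-Löf test with respect to the measure `ρ`:
the sets `G_m` are uniformly effectively open and `ρ (G_m) ≤ 2^{-m}`. -/
def IsMLTest (ρ : Measure Cantor) (G : ℕ → Set Cantor) : Prop :=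
  (∃ σ : ℕ → ℕ → BStr, Computable₂ σ ∧ ∀ m, G m = ⋃ i, cyl (σ m i)) ∧
  ∀ m, ρ (G m) ≤ (2 : ENNReal)⁻¹ ^ m

/-- `μ` is Martin-Löf absolutely continuous in `ρ`: `inf_m μ(G_m) = 0`
for every `ρ`-Martin-Löf test `(G_m)`. -/
def MLAC (μ ρ : Measure Cantor) : Prop :=
  ∀ G : ℕ → Set Cantor, IsMLTest ρ G → ⨅ m, μ (G m) = 0

/-- `Z` is Martin-Löf random with respect to `lam`. -/
def MLRandom (lam : Measure Cantor) (Z : Cantor) : Prop :=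
  ∀ G : ℕ → Set Cantor, IsMLTest lam G → Z ∉ ⋂ m, G m

/-- `ρ` is a computable measure: `ρ [x]` is a computable real, uniformly in `x`. -/
def ComputableMeasure (ρ : Measure Cantor) : Prop :=
  ∃ q : BStr → ℕ → ℚ, Computable₂ q ∧
    ∀ x k, |(q x k : ℝ) - (ρ (cyl x)).toReal| ≤ (2 : ℝ)⁻¹ ^ k

/-- `U` is a universal plain machine. -/
def UniversalPlain (U : BStr →. BStr) : Prop :=
  Partrec U ∧ ∀ M : BStr →. BStr, Partrec M →
    ∃ c : ℕ, ∀ p x, x ∈ M p → ∃ q : BStr, q.length ≤ p.length + c ∧ x ∈ U q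

/-- The domain of `M` is an antichain under the prefix relation. -/
def PrefixFreeDom (M : BStr →. BStr) : Prop :=
  ∀ p q : BStr, (M p).Dom → (M q).Dom → p <+: q → p = q

/-- `U` is a universal prefix-free machine. -/
def UniversalPrefixFree (U : BStr →. BStr) : Prop :=
  Partrec U ∧ PrefixFreeDom U ∧
  ∀ M : BStr →. BStr, Partrec M → PrefixFreeDom M →
    ∃ c : ℕ, ∀ p x, x ∈ M p → ∃ q : BStr, q.length ≤ p.length + c ∧ x ∈ U q

/-- Kolmogorov complexity of the string `x` with respect to the machine `U`:
the minimal length of a `U`-description of `x`. -/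
noncomputable def cpx (U : BStr →. BStr) (x : BStr) : ℕ :=
  sInf {n | ∃ q : BStr, q.length = n ∧ x ∈ U q}

/-- A natural number `n` identified with the string `0^n`. -/
def numStr (n : ℕ) : BStr := List.replicate n false

/-- Complexity of the natural number `n` (i.e., of the string `0^n`). -/
noncomputable def cpxN (U : BStr →. BStr) (n : ℕ) : ℕ := cpx U (numStr n)

/-- The `μ`-average complexity of the strings of length `n`:
`Σ_{|x|=n} cpx(x) · μ[x]`. -/
noncomputable def avgCpx (U : BStr →. BStr) (μ : Measure Cantor) (n : ℕ) : ℝ :=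
  ∑ v : Fin n → Bool, (cpx U (List.ofFn v) : ℝ) * (μ (cyl (List.ofFn v))).toReal

/-- A measure `μ` is trivial for the complexity given by the machine `U`
(e.g. K-trivial when `U` is the universal prefix-free machine, C-trivial
when `U` is the universal plain machine). -/
def MeasTrivial (U : BStr →. BStr) (μ : Measure Cantor) : Prop :=
  ∃ c : ℝ, ∀ n : ℕ, avgCpx U μ n ≤ (cpxN U n : ℝ) + c

/-!
The coding theorem bounds the probability that a prefix-free machine outputs `x` by a constant
multiple of `2 ^ (-K(x))`. Applied to the machine that outputs `0 ^ |x|` whenever the universal one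
outputs `x`, it shows that at most `2 ^ (b + c)` strings `x` of length `n` satisfy
`K(x) ≤ K(n) + b`. If `K(μ↾n) ≤ K(n) + p`, then by Markov's inequality, applicable because
`K(n) ≤ K(x) + O(1)`, all but `O(1 / b)` of the mass of `μ` lies in the cylinders of these few
strings. The non-atomic part of `μ` gives cylinders of length `n` mass tending to zero uniformly,
so along the infinitely many such `n` its total mass is `O(1 / b)` for every `b`.
-/

open scoped ENNReal

section Dyadic

/-- The dyadic rational `a / 2 ^ e`, encoded as the pair `(a, e)` so that computability on dyadic
rationals is computability on `ℕ × ℕ`. -/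
noncomputable def dyadicVal (d : ℕ × ℕ) : ℝ≥0∞ := d.1 / 2 ^ d.2

/-- A representative of the sum of two dyadic rationals, with common denominator the product of
the two denominators. -/
def dyadicAdd (d d' : ℕ × ℕ) : ℕ × ℕ := (d.1 * 2 ^ d'.2 + d'.1 * 2 ^ d.2, d.2 + d'.2)

theorem dyadicVal_le_iff {d d' : ℕ × ℕ} :
    dyadicVal d ≤ dyadicVal d' ↔ d.1 * 2 ^ d'.2 ≤ d'.1 * 2 ^ d.2 := by
  rw [dyadicVal, dyadicVal, ENNReal.div_le_iff (by simp) (by simp), ← ENNReal.mul_div_right_comm,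
    ENNReal.le_div_iff_mul_le (by simp) (by simp)]
  norm_cast

theorem dyadicVal_dyadicAdd (d d' : ℕ × ℕ) :
    dyadicVal (dyadicAdd d d') = dyadicVal d + dyadicVal d' := by
  have cancel (a : ℝ≥0∞) (m n : ℕ) : a * 2 ^ n / (2 ^ m * 2 ^ n) = a / 2 ^ m :=
    ENNReal.mul_div_mul_right _ _ (by simp) (by simp)
  simp only [dyadicVal, dyadicAdd, Nat.cast_add, Nat.cast_mul, Nat.cast_pow, Nat.cast_ofNat,
    pow_add, ENNReal.add_div, cancel]
  rw [mul_comm (2 ^ d.2 : ℝ≥0∞), cancel]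

theorem dyadicVal_one (r : ℕ) : dyadicVal (1, r) = 2⁻¹ ^ r := by
  simp [dyadicVal, ENNReal.inv_pow]

theorem primrec₂_nat_pow : Primrec₂ fun a b : ℕ => a ^ b := Primrec₂.unpaired'.1 Nat.Primrec.pow

theorem primrecRel_dyadicVal_le :
    PrimrecRel fun d d' : ℕ × ℕ => dyadicVal d ≤ dyadicVal d' := by
  simp only [dyadicVal_le_iff]
  have scaled {f g : (ℕ × ℕ) × ℕ × ℕ → ℕ × ℕ} (hf : Primrec f) (hg : Primrec g) :
      Primrec fun x => (f x).1 * 2 ^ (g x).2 :=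
    Primrec.nat_mul.comp (Primrec.fst.comp hf)
      (primrec₂_nat_pow.comp (Primrec.const 2) (Primrec.snd.comp hg))
  exact Primrec.nat_le.comp (scaled Primrec.fst Primrec.snd) (scaled Primrec.snd Primrec.fst)

theorem primrecRel_dyadicVal_lt :
    PrimrecRel fun d d' : ℕ × ℕ => dyadicVal d < dyadicVal d' := by
  simp only [← not_le]
  exact (primrecRel_dyadicVal_le.comp Primrec.snd Primrec.fst).not

/-- The weight `2⁻ʳ` of an optional codeword length `r`; an absent length weighs nothing. -/
noncomputable def lengthWeight (o : Option ℕ) : ℝ≥0∞ := o.elim 0 (2⁻¹ ^ ·)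

/-- The dyadic representative of the total weight of the first `n` terms of a sequence of optional
codeword lengths. -/
def dyadicSum (w : ℕ → Option ℕ) (n : ℕ) : ℕ × ℕ :=
  n.rec (0, 0) fun i d => (w i).elim d fun r => dyadicAdd d (1, r)

theorem dyadicVal_dyadicSum (w : ℕ → Option ℕ) (n : ℕ) :
    dyadicVal (dyadicSum w n) = ∑ i ∈ Finset.range n, lengthWeight (w i) := by
  induction n with
  | zero => simp [dyadicSum, dyadicVal]
  | succ n ih =>
    rw [Finset.sum_range_succ, ← ih]
    cases h : w n with
    | none => simp [dyadicSum, lengthWeight, h]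
    | some r => simp [dyadicSum, lengthWeight, h, dyadicVal_dyadicAdd, dyadicVal_one]

theorem dyadicSum_succ_of_eq_some {w : ℕ → Option ℕ} {n r : ℕ} (h : w n = some r) :
    dyadicSum w (n + 1) = dyadicAdd (dyadicSum w n) (1, r) := by
  simp [dyadicSum, h]

theorem dyadicVal_dyadicSum_mono (w : ℕ → Option ℕ) :
    Monotone fun n => dyadicVal (dyadicSum w n) := by
  simp only [dyadicVal_dyadicSum]
  exact fun m n hmn => Finset.sum_le_sum_of_subset (Finset.range_mono hmn)

theorem dyadicVal_dyadicSum_le_tsum (w : ℕ → Option ℕ) (n : ℕ) :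
    dyadicVal (dyadicSum w n) ≤ ∑' i, lengthWeight (w i) :=
  (dyadicVal_dyadicSum w n).trans_le (ENNReal.sum_le_tsum _)

theorem exists_lt_dyadicVal_dyadicSum {w : ℕ → Option ℕ} {t : ℝ≥0∞}
    (ht : t < ∑' i, lengthWeight (w i)) : ∃ n, t < dyadicVal (dyadicSum w n) := by
  simp only [ENNReal.tsum_eq_iSup_nat, lt_iSup_iff, ← dyadicVal_dyadicSum] at ht
  exact ht

theorem primrec₂_dyadicAdd : Primrec₂ dyadicAdd := by
  have hpow {f : (ℕ × ℕ) × ℕ × ℕ → ℕ × ℕ} (hf : Primrec f) : Primrec fun x => 2 ^ (f x).2 :=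
    primrec₂_nat_pow.comp (Primrec.const 2) (Primrec.snd.comp hf)
  have hfst {f : (ℕ × ℕ) × ℕ × ℕ → ℕ × ℕ} (hf : Primrec f) : Primrec fun x => (f x).1 :=
    Primrec.fst.comp hf
  exact (Primrec.nat_add.comp
    (Primrec.nat_mul.comp (hfst Primrec.fst) (hpow Primrec.snd))
    (Primrec.nat_mul.comp (hfst Primrec.snd) (hpow Primrec.fst))).pair
    (Primrec.nat_add.comp (Primrec.snd.comp Primrec.fst) (Primrec.snd.comp Primrec.snd))

theorem computable₂_dyadicSum {α : Type*} [Primcodable α] {w : α → ℕ → Option ℕ}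
    (hw : Computable₂ w) : Computable₂ fun a => dyadicSum (w a) := by
  refine (Computable.nat_rec Computable.snd (Computable.const (0, 0))
    (h := fun x s => (w x.1 s.1).elim s.2 fun r => dyadicAdd s.2 (1, r)) ?_).of_eq fun _ => rfl
  refine (Computable.option_casesOn (o := fun x : (α × ℕ) × ℕ × ℕ × ℕ => w x.1.1 x.2.1)
    (f := fun x => x.2.2) (g := fun x r => dyadicAdd x.2.2 (1, r)) ?_ ?_ ?_).of_eq fun x => ?_
  · exact hw.comp (Computable.fst.comp Computable.fst) (Computable.fst.comp Computable.snd)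
  · exact Computable.snd.comp Computable.snd
  · exact primrec₂_dyadicAdd.to_comp.comp
      (Computable.snd.comp (Computable.snd.comp Computable.fst))
      ((Computable.const 1).pair Computable.snd)
  · cases h : w x.1.1 x.2.1 <;> simp [h]

end Dyadic

section BinaryValue

/-- The number with binary expansion `q`, most significant bit first. -/
def binVal (q : BStr) : ℕ := q.foldl (fun a b => Nat.bit b a) 0

theorem binVal_concat (q : BStr) (b : Bool) : binVal (q ++ [b]) = Nat.bit b (binVal q) := by
  simp [binVal]

theorem binVal_append (q t : BStr) : binVal (q ++ t) = binVal q * 2 ^ t.length + binVal t := by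
  induction t using List.reverseRecOn with
  | nil => simp [binVal]
  | append_singleton t b ih =>
    rw [← List.append_assoc, binVal_concat, binVal_concat, ih, Nat.bit_val, Nat.bit_val]
    simp only [List.length_append, List.length_singleton, pow_succ]
    ring

theorem binVal_lt (q : BStr) : binVal q < 2 ^ q.length := by
  induction q using List.reverseRecOn with
  | nil => simp [binVal]
  | append_singleton q b ih =>
    simpa [binVal_concat] using ih

theorem exists_binVal_eq {r v : ℕ} (hv : v < 2 ^ r) : ∃ q : BStr, q.length = r ∧ binVal q = v := by
  induction r generalizing v with
  | zero => exact ⟨[], rfl, by simp_all [binVal]⟩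
  | succ r ih =>
    obtain ⟨q, hlen, hq⟩ := ih (v := v.div2) (by rw [Nat.div2_val]; omega)
    exact ⟨q ++ [v.bodd], by simp [hlen], by rw [binVal_concat, hq, Nat.bit_bodd_div2]⟩

theorem primrec_binVal : Primrec binVal := by
  have hbit : Primrec₂ fun (a : ℕ) (b : Bool) => Nat.bit b a :=
    (Primrec.nat_add.comp (Primrec.nat_mul.comp (Primrec.const 2) Primrec.fst)
      ((Primrec.dom_bool Bool.toNat).comp Primrec.snd)).of_eq fun x => (Nat.bit_val x.2 x.1).symm
  exact Primrec.list_foldl Primrec.id (Primrec.const 0) (hbit.comp₂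
    (Primrec.fst.comp₂ Primrec₂.right) (Primrec.snd.comp₂ Primrec₂.right))

/-- The left endpoint of the dyadic interval of sequences extending `q`. -/
def leftEnd (q : BStr) : ℕ × ℕ := (binVal q, q.length)

/-- The right endpoint of the dyadic interval of sequences extending `q`. -/
def rightEnd (q : BStr) : ℕ × ℕ := (binVal q + 1, q.length)

theorem primrec_leftEnd : Primrec leftEnd := primrec_binVal.pair Primrec.list_length

theorem primrec_rightEnd : Primrec rightEnd :=
  (Primrec.succ.comp primrec_binVal).pair Primrec.list_length

theorem leftEnd_lt_rightEnd (q : BStr) : dyadicVal (leftEnd q) < dyadicVal (rightEnd q) := by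
  rw [← not_le, dyadicVal_le_iff]
  simp [leftEnd, rightEnd]

theorem leftEnd_mono {q q' : BStr} (h : q <+: q') :
    dyadicVal (leftEnd q) ≤ dyadicVal (leftEnd q') := by
  obtain ⟨t, rfl⟩ := h
  simp only [dyadicVal_le_iff, leftEnd, binVal_append, List.length_append, pow_add]
  nlinarith [Nat.zero_le (binVal t * 2 ^ q.length)]

theorem rightEnd_anti {q q' : BStr} (h : q <+: q') :
    dyadicVal (rightEnd q') ≤ dyadicVal (rightEnd q) := by
  obtain ⟨t, rfl⟩ := h
  simp only [dyadicVal_le_iff, rightEnd, binVal_append, List.length_append, pow_add]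
  nlinarith [Nat.mul_le_mul_right (2 ^ q.length) (binVal_lt t)]

end BinaryValue

section Enumeration

/-- `e` lists the elements of `W`, each of them exactly once, with `none` at idle stages. -/
def Enumerates {α : Type*} (e : ℕ → Option α) (W : α → Prop) : Prop :=
  (∀ a, W a ↔ ∃ s, e s = some a) ∧ ∀ s t a, e s = some a → e t = some a → s = t

theorem Enumerates.tsum_elim {α : Type*} {e : ℕ → Option α} {W : α → Prop}
    (he : Enumerates e W) (g : α → ℝ≥0∞) :
    ∑' s, (e s).elim 0 g = ∑' a : {a // W a}, g a := by
  choose stage hstage using fun a : {a // W a} => (he.1 a).1 a.2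
  have hinj : Function.Injective stage := fun a b hab => by
    have := (hstage a).symm.trans (hab ▸ hstage b)
    exact Subtype.ext (Option.some_injective _ this)
  have hsupp : Function.support (fun s => (e s).elim 0 g) ⊆ Set.range stage := fun s hs => by
    cases h : e s with
    | none => simp [h] at hs
    | some a =>
      have ha : W a := (he.1 a).2 ⟨s, h⟩
      exact ⟨⟨a, ha⟩, he.2 _ _ a (hstage ⟨a, ha⟩) h⟩
  rw [← hinj.tsum_eq hsupp]
  simp [hstage]

variable {α β : Type*} [Primcodable α] [Primcodable β]

theorem exists_primrec_dom_eq_range {f : α →. β} (hf : Partrec f) :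
    ∃ e : ℕ → Option α, Primrec e ∧ ∀ a, (f a).Dom ↔ ∃ s, e s = some a := by
  obtain ⟨c, hc⟩ := Nat.Partrec.Code.exists_code.1 hf
  have heval (a : α) : (f a).Dom ↔ ∃ k, (c.evaln k (Encodable.encode a)).isSome := by
    have : (c.eval (Encodable.encode a)).Dom ↔ (f a).Dom := by simp [hc]
    rw [← this]
    simp only [Part.dom_iff_mem, Nat.Partrec.Code.evaln_complete, Option.isSome_iff_exists]
    exact exists_comm
  refine ⟨fun s => (Encodable.decode (α := ℕ × α) s).bind fun x =>
    if (c.evaln x.1 (Encodable.encode x.2)).isSome then some x.2 else none, ?_, fun a => ?_⟩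
  · refine Primrec.option_bind Primrec.decode (Primrec.ite ?_
      (Primrec.option_some.comp (Primrec.snd.comp Primrec.snd)) (Primrec.const none))
    exact Primrec.eq.comp (Primrec.option_isSome.comp (Nat.Partrec.Code.primrec_evaln.comp
      (((Primrec.fst.comp Primrec.snd).pair (Primrec.const c)).pair
        (Primrec.encode.comp (Primrec.snd.comp Primrec.snd))))) (Primrec.const true)
  · rw [heval]
    constructor
    · rintro ⟨k, hk⟩
      exact ⟨Encodable.encode (k, a), by simp [hk]⟩
    · rintro ⟨s, hs⟩
      obtain ⟨x, -, hx⟩ := Option.bind_eq_some_iff.1 hs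
      split_ifs at hx with hk
      cases hx
      exact ⟨_, hk⟩

theorem exists_primrec_enumerates_range {e : ℕ → Option α} (he : Primrec e) :
    ∃ e' : ℕ → Option α, Primrec e' ∧ Enumerates e' fun a => ∃ s, e s = some a := by
  classical
  have hseen : PrimrecPred fun s => ∃ t < s, e t = e s :=
    (PrimrecRel.exists_lt (R := fun t s => e t = e s)
      (Primrec.eq.comp (he.comp Primrec.fst) (he.comp Primrec.snd))).comp Primrec.id Primrec.id
  let e' (s : ℕ) : Option α := if ∃ t < s, e t = e s then none else e s
  have he' {s a} : e' s = some a ↔ (¬∃ t < s, e t = e s) ∧ e s = some a := by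
    simp only [e', Option.ite_none_left_eq_some]
  refine ⟨e', Primrec.ite hseen (Primrec.const none) he, fun a => ⟨fun h => ?_, ?_⟩,
    fun s t a hs ht => ?_⟩
  · refine ⟨Nat.find h, he'.2 ⟨?_, Nat.find_spec h⟩⟩
    rintro ⟨t, ht, hts⟩
    exact Nat.find_min h ht (hts.trans (Nat.find_spec h))
  · rintro ⟨s, hs⟩
    exact ⟨s, (he'.1 hs).2⟩
  · obtain ⟨hs_new, hs⟩ := he'.1 hs
    obtain ⟨ht_new, ht⟩ := he'.1 ht
    rcases lt_trichotomy s t with h | h | h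
    · exact (ht_new ⟨s, h, hs.trans ht.symm⟩).elim
    · exact h
    · exact (hs_new ⟨t, h, ht.trans hs.symm⟩).elim

theorem exists_primrec_enumerates {W : α → Prop} (hW : REPred W) :
    ∃ e : ℕ → Option α, Primrec e ∧ Enumerates e W := by
  obtain ⟨e, he, hrange⟩ := exists_primrec_dom_eq_range hW
  have hW' : W = fun a => ∃ s, e s = some a :=
    funext fun a => propext <| Iff.trans ⟨fun h => ⟨h, trivial⟩, fun h => h.1⟩ (hrange a)
  exact hW' ▸ exists_primrec_enumerates_range he

theorem rePred_graph {f : α →. β} (hf : Partrec f) :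
    REPred fun x : α × β => x.2 ∈ f x.1 := by
  classical
  have hcheck : Partrec fun x : α × β => (f x.1).bind fun b =>
      ((if b = x.2 then some () else Option.none : Option Unit) : Part Unit) :=
    (hf.comp Computable.fst).bind <| Computable.ofOption <| Primrec.to_comp <|
      Primrec.ite (Primrec.eq.comp Primrec.snd (Primrec.snd.comp Primrec.fst))
        (Primrec.const _) (Primrec.const _)
  refine hcheck.dom_re.of_eq fun x => ?_
  simp only [Part.dom_iff_mem]
  constructor
  · rintro ⟨_, h⟩
    obtain ⟨b, hb, h⟩ := Part.mem_bind_iff.1 h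
    split_ifs at h with hbx
    · exact hbx ▸ hb
    · simp at h
  · exact fun h => ⟨(), Part.mem_bind_iff.2 ⟨_, h, by simp⟩⟩

end Enumeration

section KraftChaitin

/-- In the Kraft–Chaitin construction for the requested lengths `w`, the string `q` serves request
number `i`: it is one bit longer than requested, so that its dyadic interval can be placed in the
slot between the partial sums `dyadicSum w i` and `dyadicSum w (i + 1)`, whatever the position of
that slot. -/
def IsCodewordFor (w : ℕ → Option ℕ) (q : BStr) (i : ℕ) : Prop :=
  (w i).map Nat.succ = some q.length ∧ dyadicVal (dyadicSum w i) ≤ dyadicVal (leftEnd q) ∧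
    dyadicVal (rightEnd q) ≤ dyadicVal (dyadicSum w (i + 1))

theorem IsCodewordFor.index_eq {w : ℕ → Option ℕ} {q q' : BStr} {i i' : ℕ}
    (h : IsCodewordFor w q i) (h' : IsCodewordFor w q' i') (hqq' : q <+: q') : i = i' := by
  have hmono := dyadicVal_dyadicSum_mono w
  have hlt := leftEnd_lt_rightEnd q'
  rcases lt_trichotomy i i' with hi | hi | hi
  · have : dyadicVal (rightEnd q') ≤ dyadicVal (leftEnd q') :=
      calc dyadicVal (rightEnd q') ≤ dyadicVal (rightEnd q) := rightEnd_anti hqq'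
        _ ≤ dyadicVal (dyadicSum w (i + 1)) := h.2.2
        _ ≤ dyadicVal (dyadicSum w i') := hmono hi
        _ ≤ dyadicVal (leftEnd q') := h'.2.1
    exact (hlt.not_ge this).elim
  · exact hi
  · have : dyadicVal (rightEnd q') ≤ dyadicVal (leftEnd q') :=
      calc dyadicVal (rightEnd q') ≤ dyadicVal (dyadicSum w (i' + 1)) := h'.2.2
        _ ≤ dyadicVal (dyadicSum w i) := hmono hi
        _ ≤ dyadicVal (leftEnd q) := h.2.1
        _ ≤ dyadicVal (leftEnd q') := leftEnd_mono hqq'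
    exact (hlt.not_ge this).elim

theorem IsCodewordFor.length_eq {w : ℕ → Option ℕ} {q : BStr} {i r : ℕ}
    (h : IsCodewordFor w q i) (hr : w i = some r) : q.length = r + 1 := by
  simpa [hr] using h.1.symm

theorem IsCodewordFor.eq_of_prefix {w : ℕ → Option ℕ} {q q' : BStr} {i i' : ℕ}
    (h : IsCodewordFor w q i) (h' : IsCodewordFor w q' i') (hqq' : q <+: q') : q = q' := by
  obtain rfl := h.index_eq h' hqq'
  exact hqq'.eq_of_length (Option.some_injective _ (h.1.symm.trans h'.1))

theorem exists_isCodewordFor {w : ℕ → Option ℕ} (hw : ∑' i, lengthWeight (w i) ≤ 1) {i r : ℕ}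
    (hr : w i = some r) : ∃ q, IsCodewordFor w q i := by
  set d := dyadicSum w i
  -- the least multiple of `2 ^ (-(r + 1))` lying strictly to the right of `d`
  set v := d.1 * 2 ^ (r + 1) / 2 ^ d.2 + 1
  have hle : dyadicVal d ≤ dyadicVal (v, r + 1) :=
    dyadicVal_le_iff.2 <| (Nat.lt_mul_div_succ _ (by positivity)).le.trans_eq (mul_comm _ _)
  have hge : dyadicVal (v + 1, r + 1) ≤ dyadicVal (dyadicSum w (i + 1)) := by
    rw [dyadicSum_succ_of_eq_some hr, dyadicVal_le_iff]
    have hfloor : d.1 * 2 ^ (r + 1) / 2 ^ d.2 * 2 ^ d.2 ≤ d.1 * 2 ^ (r + 1) :=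
      Nat.div_mul_le_self _ _
    calc (v + 1) * 2 ^ (d.2 + r)
        = (d.1 * 2 ^ (r + 1) / 2 ^ d.2 * 2 ^ d.2 + 2 * 2 ^ d.2) * 2 ^ r := by ring
      _ ≤ (d.1 * 2 ^ (r + 1) + 2 * 2 ^ d.2) * 2 ^ r := by gcongr
      _ = (d.1 * 2 ^ r + 1 * 2 ^ d.2) * 2 ^ (r + 1) := by ring
  have hv : v < 2 ^ (r + 1) := by
    have := hge.trans ((dyadicVal_dyadicSum_le_tsum w _).trans (hw.trans_eq
      (by simp [dyadicVal] : 1 = dyadicVal (1, 0))))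
    simpa [Nat.succ_le_iff] using dyadicVal_le_iff.1 this
  obtain ⟨q, hlen, hq⟩ := exists_binVal_eq hv
  exact ⟨q, by simp [hr, hlen], by simpa [leftEnd, hlen, hq], by simpa [rightEnd, hlen, hq]⟩

theorem computablePred_isCodewordFor {w : ℕ → Option ℕ} (hw : Computable w) :
    ComputablePred fun x : BStr × ℕ => IsCodewordFor w x.1 x.2 := by
  classical
  have hlength : Computable fun x : BStr × ℕ => decide ((w x.2).map Nat.succ = some x.1.length) :=
    (PrimrecRel.decide Primrec.eq).to_comp.comp
      (Computable.option_map (hw.comp Computable.snd) (Computable.succ.comp Computable.snd).to₂)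
      (Computable.option_some.comp (Primrec.list_length.to_comp.comp Computable.fst))
  have hle {f g : BStr × ℕ → ℕ × ℕ} (hf : Computable f) (hg : Computable g) :
      Computable fun x => decide (dyadicVal (f x) ≤ dyadicVal (g x)) :=
    primrecRel_dyadicVal_le.decide.to_comp.comp hf hg
  have hsum : Computable (dyadicSum w) :=
    (computable₂_dyadicSum (hw.comp Computable.snd).to₂).comp (Computable.const ()) Computable.id
  have hleft := hle (hsum.comp Computable.snd) (primrec_leftEnd.to_comp.comp Computable.fst)
  have hright := hle (primrec_rightEnd.to_comp.comp Computable.fst)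
    (hsum.comp (Computable.succ.comp Computable.snd))
  refine ⟨inferInstance, (Primrec.and.to_comp.comp hlength
    (Primrec.and.to_comp.comp hleft hright)).of_eq fun x => ?_⟩
  simp [IsCodewordFor]

theorem exists_prefixFree_machine {e : ℕ → Option (ℕ × BStr)} (he : Computable e)
    (hw : ∑' i, lengthWeight ((e i).map Prod.fst) ≤ 1) :
    ∃ M : BStr →. BStr, Partrec M ∧ PrefixFreeDom M ∧
      ∀ i r x, e i = some (r, x) → ∃ q, q.length = r + 1 ∧ x ∈ M q := by
  classical
  set w := fun i => (e i).map Prod.fst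
  let out (q : BStr) (i : ℕ) : Option BStr :=
    if IsCodewordFor w q i then (e i).map Prod.snd else none
  have hout {q i x} : x ∈ out q i ↔ IsCodewordFor w q i ∧ x ∈ (e i).map Prod.snd := by
    simp [out, Option.ite_none_right_eq_some]
  refine ⟨fun q => Nat.rfindOpt (out q), ?_, fun q q' hq hq' hqq' => ?_, fun i r x hi => ?_⟩
  · have hw_comp : Computable w :=
      Computable.option_map he (Computable.fst.comp Computable.snd)
    exact Partrec.rfindOpt ((Computable.cond (computablePred_isCodewordFor hw_comp).decide
      (Computable.option_map (he.comp Computable.snd) (Computable.snd.comp Computable.snd).to₂)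
      (Computable.const none)).of_eq fun x => by simp only [out, Bool.cond_decide])
  · obtain ⟨i, x, hi⟩ := Nat.rfindOpt_dom.1 hq
    obtain ⟨i', x', hi'⟩ := Nat.rfindOpt_dom.1 hq'
    exact (hout.1 hi).1.eq_of_prefix (hout.1 hi').1 hqq'
  · have hwi : w i = some r := by simp [w, hi]
    obtain ⟨q, hq⟩ := exists_isCodewordFor hw hwi
    have hxi : x ∈ out q i := hout.2 ⟨hq, by simp [hi]⟩
    have hdom : (Nat.rfindOpt (out q)).Dom := Nat.rfindOpt_dom.2 ⟨i, x, hxi⟩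
    obtain ⟨j, hj⟩ := Nat.rfindOpt_spec (Part.get_mem hdom)
    obtain rfl := (hout.1 hj).1.index_eq hq (List.prefix_refl q)
    exact ⟨q, hq.length_eq hwi, Option.mem_unique hxi hj ▸ Part.get_mem hdom⟩

end KraftChaitin

section PrefixFreeMachines

theorem cpx_le_length {U : BStr →. BStr} {q x : BStr} (h : x ∈ U q) : cpx U x ≤ q.length :=
  Nat.sInf_le ⟨q, rfl, h⟩

theorem prefixFreeDom_map {M : BStr →. BStr} (hM : PrefixFreeDom M) (f : BStr → BStr) :
    PrefixFreeDom fun q => (M q).map f :=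
  hM

variable {U : BStr →. BStr}

theorem cpx_le_length_add (hU : UniversalPrefixFree U) {M : BStr →. BStr} (hM : Partrec M)
    (hfree : PrefixFreeDom M) : ∃ c, ∀ q x, x ∈ M q → cpx U x ≤ q.length + c := by
  obtain ⟨c, hc⟩ := hU.2.2 M hM hfree
  refine ⟨c, fun q x hx => ?_⟩
  obtain ⟨q', hlen, hq'⟩ := hc q x hx
  exact (cpx_le_length hq').trans hlen

theorem exists_length_eq_cpx (hU : UniversalPrefixFree U) (x : BStr) :
    ∃ q, q.length = cpx U x ∧ x ∈ U q := by
  let M : BStr →. BStr := fun q => ((if q = [] then some x else Option.none : Option BStr) : Part _)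
  have hM : Partrec M := Computable.ofOption <| Primrec.to_comp <|
    Primrec.ite (Primrec.eq.comp Primrec.id (Primrec.const [])) (Primrec.const _) (Primrec.const _)
  have hdom {q} (hq : (M q).Dom) : q = [] := by
    by_contra h
    simp [M, h] at hq
  obtain ⟨c, hc⟩ := hU.2.2 M hM fun p q hp hq _ => (hdom hp).trans (hdom hq).symm
  obtain ⟨q, -, hq⟩ := hc [] x (by simp [M])
  exact Nat.sInf_mem (s := {n | ∃ q : BStr, q.length = n ∧ x ∈ U q}) ⟨_, q, rfl, hq⟩

theorem cpx_comp_le (hU : UniversalPrefixFree U) {f : BStr → BStr} (hf : Computable f) :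
    ∃ c, ∀ x, cpx U (f x) ≤ cpx U x + c := by
  obtain ⟨c, hc⟩ := cpx_le_length_add hU (hU.1.map (hf.comp Computable.snd).to₂)
    (prefixFreeDom_map hU.2.1 f)
  refine ⟨c, fun x => ?_⟩
  obtain ⟨q, hlen, hq⟩ := exists_length_eq_cpx hU x
  exact hlen ▸ hc q (f x) (Part.mem_map f hq)

theorem kraft_chaitin (hU : UniversalPrefixFree U) {W : ℕ × BStr → Prop} (hW : REPred W)
    (hsum : ∑' a : {a // W a}, (2⁻¹ : ℝ≥0∞) ^ a.1.1 ≤ 1) :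
    ∃ c, ∀ r x, W (r, x) → cpx U x ≤ r + c := by
  obtain ⟨e, he, henum⟩ := exists_primrec_enumerates hW
  have hweight : ∑' i, lengthWeight ((e i).map Prod.fst) ≤ 1 := by
    refine le_of_eq_of_le (tsum_congr fun i => ?_) ((henum.tsum_elim (2⁻¹ ^ ·.1)).trans_le hsum)
    cases e i <;> rfl
  obtain ⟨M, hM, hfree, hcode⟩ := exists_prefixFree_machine he.to_comp hweight
  obtain ⟨c, hc⟩ := cpx_le_length_add hU hM hfree
  refine ⟨c + 1, fun r x hrx => ?_⟩
  obtain ⟨i, hi⟩ := (henum.1 _).1 hrx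
  obtain ⟨q, hlen, hq⟩ := hcode i r x hi
  exact (hc q x hq).trans_eq (by omega)

end PrefixFreeMachines

section Kraft

theorem uniquelyDecodable_of_isAntichain_prefix {α : Type*} {S : Set (List α)}
    (hS : IsAntichain (· <+: ·) S) (hnil : [] ∉ S) : InformationTheory.UniquelyDecodable S := by
  have hflatten {w : List α} {L : List (List α)} (hw : w ∈ S) : [] ≠ (w :: L).flatten := by
    rintro h
    exact hnil ((List.append_eq_nil_iff.1 h.symm).1 ▸ hw)
  intro L₁
  induction L₁ with
  | nil =>
    rintro (_ | ⟨w, L₂⟩) _ h₂ h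
    · rfl
    · exact (hflatten (h₂ w List.mem_cons_self) h).elim
  | cons w L₁ ih =>
    rintro (_ | ⟨w', L₂⟩) h₁ h₂ h
    · exact (hflatten (h₁ w List.mem_cons_self) h.symm).elim
    · rw [List.forall_mem_cons] at h₁ h₂
      rw [List.flatten_cons, List.flatten_cons] at h
      have hw : w = w' := by
        rcases List.prefix_or_prefix_of_prefix (List.prefix_append w _) ⟨_, h.symm⟩ with hp | hp
        · exact hS.eq h₁.1 h₂.1 hp
        · exact (hS.eq h₂.1 h₁.1 hp).symm
      subst hw
      rw [ih L₂ h₁.2 h₂.2 (List.append_cancel_left h)]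

variable {α : Type*} [Fintype α] [Nonempty α]

theorem sum_inv_card_pow_length_le_one {S : Finset (List α)}
    (hS : IsAntichain (· <+: ·) (S : Set (List α))) :
    ∑ q ∈ S, (Fintype.card α : ℝ≥0∞)⁻¹ ^ q.length ≤ 1 := by
  by_cases hnil : [] ∈ S
  · have : S = {[]} := Finset.eq_singleton_iff_unique_mem.2
      ⟨hnil, fun q hq => (hS.eq hnil hq List.nil_prefix).symm⟩
    simp [this]
  · have hkraft := InformationTheory.kraft_mcmillan_inequality
      (uniquelyDecodable_of_isAntichain_prefix hS hnil)
    have hcast (q : List α) : (Fintype.card α : ℝ≥0∞)⁻¹ ^ q.length =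
        ENNReal.ofReal ((1 / Fintype.card α) ^ q.length) := by
      rw [one_div, ENNReal.ofReal_pow (by positivity), ENNReal.ofReal_inv_of_pos
        (by exact_mod_cast Fintype.card_pos), ENNReal.ofReal_natCast]
    simp only [hcast]
    rw [← ENNReal.ofReal_sum_of_nonneg fun _ _ => by positivity]
    exact ENNReal.ofReal_le_one.2 hkraft

theorem tsum_inv_card_pow_length_le_one {S : Set (List α)} (hS : IsAntichain (· <+: ·) S) :
    ∑' q : S, (Fintype.card α : ℝ≥0∞)⁻¹ ^ q.1.length ≤ 1 := by
  rw [ENNReal.tsum_eq_iSup_sum]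
  refine iSup_le fun T => ?_
  have hT : IsAntichain (· <+: ·) (T.map (.subtype _) : Set (List α)) :=
    hS.subset (by simp)
  simpa using sum_inv_card_pow_length_le_one hT

end Kraft

section CodingTheorem

theorem inv_two_pow_le_of_le_add {m n c : ℕ} (h : m ≤ n + c) :
    (2⁻¹ : ℝ≥0∞) ^ n ≤ 2 ^ c * 2⁻¹ ^ m :=
  calc (2⁻¹ : ℝ≥0∞) ^ n = 2 ^ c * 2⁻¹ ^ (n + c) := by
        rw [pow_add, mul_left_comm, ← mul_pow, ENNReal.mul_inv_cancel (by simp) (by simp), one_pow,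
          mul_one]
    _ ≤ 2 ^ c * 2⁻¹ ^ m := by gcongr _ * ?_; exact pow_le_pow_right_of_le_one' (by simp) h

theorem rePred_exists_nat {α : Type*} [Primcodable α] {P : α → ℕ → Prop}
    (hP : ComputablePred fun x : α × ℕ => P x.1 x.2) : REPred fun a => ∃ n, P a n := by
  classical
  have hsearch : Computable₂ fun (a : α) n => if P a n then some () else none :=
    (Computable.cond hP.decide (Computable.const (some ())) (Computable.const none)).of_eq
      fun x => by simp only [Bool.cond_decide]
  exact (Partrec.rfindOpt hsearch).dom_re.of_eq fun a => by simp [Nat.rfindOpt_dom]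

/-- The a priori probability that the machine `M` outputs `x` on random input bits. -/
noncomputable def outputProb (M : BStr →. BStr) (x : BStr) : ℝ≥0∞ :=
  ∑' q : {q | x ∈ M q}, 2⁻¹ ^ q.1.length

theorem isAntichain_dom {M : BStr →. BStr} (hM : PrefixFreeDom M) :
    IsAntichain (· <+: ·) M.Dom :=
  fun p hp q hq hpq h => hpq (hM p q hp hq h)

theorem tsum_outputProb_le_one {M : BStr →. BStr} (hM : PrefixFreeDom M) :
    ∑' x, outputProb M x ≤ 1 := by
  simp only [outputProb]
  rw [← ENNReal.tsum_sigma (fun x (q : {q | x ∈ M q}) => (2⁻¹ : ℝ≥0∞) ^ q.1.length)]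
  let toDom (a : Σ x, {q | x ∈ M q}) : M.Dom := ⟨a.2.1, Part.dom_iff_mem.2 ⟨a.1, a.2.2⟩⟩
  have hinj : Function.Injective toDom := by
    rintro ⟨x, q, hx⟩ ⟨x', q', hx'⟩ h
    obtain rfl : q = q' := congrArg Subtype.val h
    obtain rfl : x = x' := Part.mem_unique hx hx'
    rfl
  calc ∑' a : Σ x, {q | x ∈ M q}, (2⁻¹ : ℝ≥0∞) ^ a.2.1.length
      ≤ ∑' q : M.Dom, 2⁻¹ ^ q.1.length :=
        ENNReal.tsum_comp_le_tsum_of_injective hinj fun q : M.Dom => 2⁻¹ ^ q.1.length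
    _ ≤ 1 := by simpa using tsum_inv_card_pow_length_le_one (isAntichain_dom hM)

theorem outputProb_le_one {M : BStr →. BStr} (hM : PrefixFreeDom M) (x : BStr) :
    outputProb M x ≤ 1 :=
  (ENNReal.le_tsum x).trans (tsum_outputProb_le_one hM)

theorem exists_computable_tsum_lengthWeight_eq_outputProb {M : BStr →. BStr} (hM : Partrec M) :
    ∃ w : BStr → ℕ → Option ℕ, Computable₂ w ∧
      ∀ x, ∑' s, lengthWeight (w x s) = outputProb M x := by
  obtain ⟨e, he, henum⟩ := exists_primrec_enumerates (rePred_graph hM)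
  refine ⟨fun x s => (e s).bind fun a => if a.2 = x then some a.1.length else none, ?_, fun x => ?_⟩
  · refine Primrec.to_comp (Primrec.option_bind (he.comp Primrec.snd) (Primrec.ite ?_
      (Primrec.option_some.comp (Primrec.list_length.comp (Primrec.fst.comp Primrec.snd)))
      (Primrec.const none)))
    exact Primrec.eq.comp (Primrec.snd.comp Primrec.snd) (Primrec.fst.comp Primrec.fst)
  · have hinj : Function.Injective fun q : {q | x ∈ M q} =>
        (⟨(q.1, x), q.2⟩ : {a : BStr × BStr // a.2 ∈ M a.1}) := fun q q' h => by
      simpa [Subtype.ext_iff] using h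
    calc ∑' s, lengthWeight ((e s).bind fun a => if a.2 = x then some a.1.length else none)
        = ∑' s, (e s).elim 0 fun a => if a.2 = x then 2⁻¹ ^ a.1.length else 0 := by
          refine tsum_congr fun s => ?_
          cases e s with
          | none => rfl
          | some a => by_cases h : a.2 = x <;> simp [lengthWeight, h]
      _ = ∑' a : {a : BStr × BStr // a.2 ∈ M a.1},
            if a.1.2 = x then 2⁻¹ ^ a.1.1.length else 0 := henum.tsum_elim _
      _ = outputProb M x := by
          rw [outputProb, ← hinj.tsum_eq]
          · simp
          · rintro ⟨⟨q, y⟩, hq⟩ ha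
            obtain rfl : y = x := by by_contra h; simp [h] at ha
            exact ⟨⟨q, hq⟩, rfl⟩

-- Strictness makes the relation enumerable; the factor `2` absorbs the geometric series of the
-- weights of all admissible lengths `r` for one string.
theorem rePred_lt_outputProb {M : BStr →. BStr} (hM : Partrec M) :
    REPred fun a : ℕ × BStr => 2 * 2⁻¹ ^ a.1 < outputProb M a.2 := by
  classical
  obtain ⟨w, hw, hsum⟩ := exists_computable_tsum_lengthWeight_eq_outputProb hM
  have hP : ComputablePred fun x : (ℕ × BStr) × ℕ =>
      dyadicVal (2, x.1.1) < dyadicVal (dyadicSum (w x.1.2) x.2) := by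
    refine ⟨inferInstance, ?_⟩
    exact primrecRel_dyadicVal_lt.decide.to_comp.comp
      ((Computable.const 2).pair (Computable.fst.comp Computable.fst))
      ((computable₂_dyadicSum hw).comp (Computable.snd.comp Computable.fst) Computable.snd)
  have hre : REPred fun a : ℕ × BStr => ∃ n, dyadicVal (2, a.1) < dyadicVal (dyadicSum (w a.2) n) :=
    rePred_exists_nat hP
  refine hre.of_eq fun a => ?_
  have htwo : dyadicVal (2, a.1) = 2 * 2⁻¹ ^ a.1 := by
    simp [dyadicVal, ENNReal.inv_pow, div_eq_mul_inv]
  simp only [htwo, ← hsum]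
  exact ⟨fun ⟨s, hs⟩ => hs.trans_le (dyadicVal_dyadicSum_le_tsum _ s),
    exists_lt_dyadicVal_dyadicSum⟩

theorem tsum_indicator_inv_two_pow_le (t : ℝ≥0∞) :
    ∑' r : ℕ, {r : ℕ | 2 * 2⁻¹ ^ r < t}.indicator (fun r => (2⁻¹ : ℝ≥0∞) ^ r) r ≤ t := by
  classical
  by_cases h : ∃ r : ℕ, 2 * 2⁻¹ ^ r < t
  · set m := Nat.find h
    rw [← (add_right_injective m).tsum_eq]
    · calc ∑' k, {r : ℕ | 2 * 2⁻¹ ^ r < t}.indicator (fun r => (2⁻¹ : ℝ≥0∞) ^ r) (m + k)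
          ≤ ∑' k : ℕ, (2⁻¹ : ℝ≥0∞) ^ m * 2⁻¹ ^ k :=
            ENNReal.tsum_le_tsum fun k =>
              (Set.indicator_le_self _ _ _).trans_eq (pow_add _ _ _)
        _ = 2 * 2⁻¹ ^ m := by
            rw [ENNReal.tsum_mul_left, ENNReal.tsum_geometric, ENNReal.one_sub_inv_two, inv_inv,
              mul_comm]
        _ ≤ t := (Nat.find_spec h).le
    · intro r hr
      have hrt : 2 * 2⁻¹ ^ r < t := Set.mem_of_indicator_ne_zero
        (s := {r : ℕ | 2 * 2⁻¹ ^ r < t}) hr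
      exact ⟨r - m, Nat.add_sub_of_le (Nat.find_min' h hrt)⟩
  · push Not at h
    simp [h]

theorem tsum_requests_le_one {M : BStr →. BStr} (hM : PrefixFreeDom M) :
    ∑' a : {a : ℕ × BStr // 2 * 2⁻¹ ^ a.1 < outputProb M a.2}, (2⁻¹ : ℝ≥0∞) ^ a.1.1 ≤ 1 :=
  calc ∑' a : {a : ℕ × BStr // 2 * 2⁻¹ ^ a.1 < outputProb M a.2}, (2⁻¹ : ℝ≥0∞) ^ a.1.1
      = ∑' x, ∑' r : ℕ, {r : ℕ | 2 * 2⁻¹ ^ r < outputProb M x}.indicator (2⁻¹ ^ ·) r := by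
        rw [ENNReal.tsum_comm, ← ENNReal.tsum_prod]
        exact tsum_subtype {a : ℕ × BStr | 2 * 2⁻¹ ^ a.1 < outputProb M a.2} (2⁻¹ ^ ·.1)
    _ ≤ ∑' x, outputProb M x := ENNReal.tsum_le_tsum fun x => tsum_indicator_inv_two_pow_le _
    _ ≤ 1 := tsum_outputProb_le_one hM

theorem outputProb_le_cpx {U M : BStr →. BStr} (hU : UniversalPrefixFree U) (hM : Partrec M)
    (hfree : PrefixFreeDom M) : ∃ c : ℕ, ∀ x, outputProb M x ≤ 2 ^ c * 2⁻¹ ^ cpx U x := by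
  classical
  obtain ⟨c, hc⟩ := kraft_chaitin hU (rePred_lt_outputProb hM) (tsum_requests_le_one hfree)
  refine ⟨c + 2, fun x => ?_⟩
  by_cases h : ∃ r : ℕ, 2 * 2⁻¹ ^ r < outputProb M x
  · obtain ⟨r, hr⟩ : ∃ r, Nat.find h = r + 1 := by
      refine Nat.exists_eq_succ_of_ne_zero fun h0 => ?_
      have := (Nat.find_spec h).trans_le (outputProb_le_one hfree x)
      simp [h0] at this
    have hmin : outputProb M x ≤ 2 * 2⁻¹ ^ r := not_lt.1 (Nat.find_min h (by omega))
    calc outputProb M x ≤ 2 * 2⁻¹ ^ r := hmin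
      _ ≤ 2 * (2 ^ (c + 1) * 2⁻¹ ^ cpx U x) := by
          gcongr _ * ?_
          exact inv_two_pow_le_of_le_add (by have := hc _ x (hr ▸ Nat.find_spec h); omega)
      _ = 2 ^ (c + 2) * 2⁻¹ ^ cpx U x := by ring
  · push Not at h
    have hlim : Tendsto (fun r : ℕ => 2 * (2⁻¹ : ℝ≥0∞) ^ r) atTop (nhds (2 * 0)) :=
      ENNReal.Tendsto.const_mul (ENNReal.tendsto_pow_atTop_nhds_zero_of_lt_one (by simp)) (by simp)
    exact (ge_of_tendsto' hlim h).trans (by simp)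

theorem exists_card_le_of_cpx_le {U : BStr →. BStr} (hU : UniversalPrefixFree U)
    {f : BStr → BStr} (hf : Computable f) :
    ∃ c : ℕ, ∀ (y : BStr) (b : ℕ) (A : Finset BStr),
      (∀ x ∈ A, f x = y ∧ cpx U x ≤ cpx U y + b) → A.card ≤ 2 ^ (b + c) := by
  set M : BStr →. BStr := fun q => (U q).map f
  obtain ⟨c, hc⟩ := outputProb_le_cpx hU (M := M) (hU.1.map (hf.comp Computable.snd).to₂)
    (prefixFreeDom_map hU.2.1 f)
  refine ⟨c, fun y b A hA => ?_⟩
  choose program hlen hprogram using exists_length_eq_cpx hU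
  have hmem (x : A) : y ∈ M (program x) := (hA x x.2).1 ▸ Part.mem_map f (hprogram x)
  have hinj : Function.Injective fun x : A => (⟨program x, hmem x⟩ : {q | y ∈ M q}) :=
    fun x x' h => by
      have hxx' : program x = program x' := congrArg Subtype.val h
      exact Subtype.ext (Part.mem_unique (hprogram x) (hxx' ▸ hprogram x'))
  have hmass : A.card * (2⁻¹ : ℝ≥0∞) ^ cpx U y ≤ 2 ^ (b + c) * 2⁻¹ ^ cpx U y :=
    calc (A.card : ℝ≥0∞) * 2⁻¹ ^ cpx U y
        = ∑' _ : A, 2⁻¹ ^ cpx U y := by simp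
      _ ≤ ∑' x : A, 2 ^ b * 2⁻¹ ^ (program x).length := by
          refine ENNReal.tsum_le_tsum fun x => inv_two_pow_le_of_le_add ?_
          exact (hlen x).trans_le (hA x x.2).2
      _ ≤ 2 ^ b * outputProb M y := by
          rw [ENNReal.tsum_mul_left]
          gcongr
          exact ENNReal.tsum_comp_le_tsum_of_injective hinj fun q => 2⁻¹ ^ q.1.length
      _ ≤ 2 ^ b * (2 ^ c * 2⁻¹ ^ cpx U y) := by gcongr; exact hc y
      _ = 2 ^ (b + c) * 2⁻¹ ^ cpx U y := by rw [pow_add, mul_assoc]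
  rw [ENNReal.mul_le_mul_iff_left (by simp) (by simp)] at hmass
  exact_mod_cast hmass

end CodingTheorem

section Cylinders

variable {E : ℕ → Type*} [∀ n, MeasurableSpace (E n)] [∀ n, MeasurableSingletonClass (E n)]

theorem measurableSet_cylinder (x : ∀ n, E n) (n : ℕ) : MeasurableSet (PiNat.cylinder x n) := by
  rw [PiNat.cylinder_eq_pi]
  exact MeasurableSet.pi (Finset.countable_toSet _) fun i _ => measurableSet_singleton _

theorem tendsto_measureReal_cylinder (ν : Measure (∀ n, E n)) [IsFiniteMeasure ν]
    (x : ∀ n, E n) :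
    Tendsto (fun n => ν.real (PiNat.cylinder x n)) atTop (nhds (ν.real {x})) := by
  have hinter : ⋂ n, PiNat.cylinder x n = {x} := by
    ext y
    simp only [Set.mem_iInter, PiNat.mem_cylinder_iff, Set.mem_singleton_iff, funext_iff]
    exact ⟨fun h i => h (i + 1) i i.lt_succ_self, fun h _ i _ => h i⟩
  have := tendsto_measure_iInter_atTop (μ := ν)
    (fun n => (measurableSet_cylinder x n).nullMeasurableSet)
    (fun _ _ h => PiNat.cylinder_anti x h) ⟨0, measure_ne_top _ _⟩
  rw [hinter] at this
  exact (ENNReal.tendsto_toReal (measure_ne_top _ _)).comp this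

-- Dini's theorem: the convergence is monotone, and the limit 0 is continuous.
theorem tendstoUniformly_measureReal_cylinder [∀ n, TopologicalSpace (E n)]
    [∀ n, DiscreteTopology (E n)] [∀ n, CompactSpace (E n)] (ν : Measure (∀ n, E n))
    [IsFiniteMeasure ν] [NullSingletonClass ν] :
    TendstoUniformly (fun n x => ν.real (PiNat.cylinder x n)) 0 atTop := by
  refine Antitone.tendstoUniformly_of_forall_tendsto (fun n => ?_)
    (fun m n hmn x => measureReal_mono (PiNat.cylinder_anti x hmn)) continuous_const fun x => ?_
  · refine IsLocallyConstant.continuous ((IsLocallyConstant.iff_eventually_eq _).2 fun x => ?_)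
    filter_upwards [(PiNat.isOpen_cylinder E x n).mem_nhds (PiNat.self_mem_cylinder x n)] with y hy
    rw [PiNat.mem_cylinder_iff_eq.1 hy]
  · have := tendsto_measureReal_cylinder ν x
    rwa [measureReal_def, measure_singleton, ENNReal.toReal_zero] at this

theorem seg_eq_seg_iff {Z Z' : Cantor} {n : ℕ} : seg Z n = seg Z' n ↔ Z ∈ PiNat.cylinder Z' n := by
  simp only [seg, List.ofFn_inj, funext_iff, PiNat.mem_cylinder_iff]
  exact ⟨fun h i hi => h ⟨i, hi⟩, fun h i => h i i.2⟩

theorem cyl_ofFn {n : ℕ} (v : Fin n → Bool) :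
    cyl (List.ofFn v) = (fun Z : Cantor => fun i : Fin n => Z i) ⁻¹' {v} := by
  ext Z
  simp only [cyl, Set.mem_ofPred_eq, Set.mem_preimage, Set.mem_singleton_iff, funext_iff]
  constructor
  · intro h i
    simpa using h ⟨i, by simp⟩
  · rintro h ⟨i, hi⟩
    simpa using h ⟨i, by simpa using hi⟩

theorem measurable_firstBits (n : ℕ) :
    Measurable fun Z : Cantor => fun i : Fin n => Z i :=
  measurable_pi_lambda _ fun _ => measurable_pi_apply _

theorem integrable_comp_seg (μ : Measure Cantor) [IsFiniteMeasure μ] (f : BStr → ℝ) (n : ℕ) :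
    Integrable (fun Z => f (seg Z n)) μ :=
  (Integrable.of_finite (f := fun v : Fin n → Bool => f (List.ofFn v))).comp_measurable
    (measurable_firstBits n)

theorem integral_cpx_seg (U : BStr →. BStr) (μ : Measure Cantor) [IsFiniteMeasure μ] (n : ℕ) :
    ∫ Z, (cpx U (seg Z n) : ℝ) ∂μ = avgCpx U μ n := by
  refine (integral_map (f := fun v : Fin n → Bool => (cpx U (List.ofFn v) : ℝ))
    (measurable_firstBits n).aemeasurable (by fun_prop)).symm.trans ?_
  rw [integral_fintype .of_finite, avgCpx]
  refine Finset.sum_congr rfl fun v _ => ?_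
  rw [cyl_ofFn, smul_eq_mul, mul_comm, map_measureReal_apply (measurable_firstBits n)
    (measurableSet_singleton v), measureReal_def]

theorem measureReal_seg_mem_le (ν : Measure Cantor) [IsFiniteMeasure ν] {n : ℕ} {δ : ℝ}
    (hδ : ∀ Z, ν.real (PiNat.cylinder Z n) ≤ δ) (A : Finset BStr) :
    ν.real {Z | seg Z n ∈ A} ≤ A.card * δ := by
  have hδ_nonneg : 0 ≤ δ := measureReal_nonneg.trans (hδ fun _ => false)
  have hfiber (x : BStr) : ν.real {Z | seg Z n = x} ≤ δ := by
    rcases Set.eq_empty_or_nonempty {Z | seg Z n = x} with h | ⟨Z, rfl⟩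
    · simpa [h]
    · exact (measureReal_mono fun _ => seg_eq_seg_iff.1).trans (hδ Z)
  calc ν.real {Z | seg Z n ∈ A} = ν.real (⋃ x ∈ A, {Z | seg Z n = x}) := by congr 1; ext; simp
    _ ≤ ∑ x ∈ A, ν.real {Z | seg Z n = x} := measureReal_biUnion_finset_le _ _
    _ ≤ A.card * δ := by simpa using Finset.sum_le_card_nsmul A _ δ fun x _ => hfiber x

end Cylinders

section Atoms

theorem length_seg (Z : Cantor) (n : ℕ) : (seg Z n).length = n := List.length_ofFn

theorem computable_numStr_length : Computable fun x : BStr => numStr x.length :=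
  (Primrec.list_map Primrec.id (Primrec.const false).to₂).to_comp.of_eq fun x => by simp [numStr]

variable {U : BStr →. BStr}

theorem exists_mul_measureReal_cpx_gt_le (hU : UniversalPrefixFree U) :
    ∃ c : ℝ, ∀ (μ : Measure Cantor) [IsProbabilityMeasure μ] (n b : ℕ) (p : ℝ),
      avgCpx U μ n ≤ cpxN U n + p →
        b * μ.real {Z | cpxN U n + b < cpx U (seg Z n)} ≤ p + c := by
  obtain ⟨c, hc⟩ := cpx_comp_le hU computable_numStr_length
  refine ⟨c, fun μ _ n b p hp => ?_⟩
  have hexcess_nonneg (Z : Cantor) : (0 : ℝ) ≤ cpx U (seg Z n) - (cpxN U n - c) := by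
    have : cpxN U n ≤ cpx U (seg Z n) + c := by simpa [length_seg, cpxN] using hc (seg Z n)
    have : (cpxN U n : ℝ) ≤ cpx U (seg Z n) + c := mod_cast this
    linarith
  have hcpx : Integrable (fun Z => (cpx U (seg Z n) : ℝ)) μ :=
    integrable_comp_seg μ (fun x => (cpx U x : ℝ)) n
  calc b * μ.real {Z | cpxN U n + b < cpx U (seg Z n)}
      ≤ b * μ.real {Z | (b : ℝ) ≤ cpx U (seg Z n) - (cpxN U n - c)} := by
        refine mul_le_mul_of_nonneg_left (measureReal_mono fun Z hZ => ?_) b.cast_nonneg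
        have hZ : (cpxN U n + b : ℝ) < cpx U (seg Z n) := mod_cast hZ
        have : (0 : ℝ) ≤ c := c.cast_nonneg
        exact (by linarith : (b : ℝ) ≤ cpx U (seg Z n) - (cpxN U n - c))
    _ ≤ ∫ Z, ((cpx U (seg Z n) : ℝ) - (cpxN U n - c)) ∂μ :=
        mul_meas_ge_le_integral_of_nonneg (ae_of_all _ hexcess_nonneg)
          (hcpx.sub (integrable_const _)) b
    _ = avgCpx U μ n - (cpxN U n - c) := by
        rw [integral_sub hcpx (integrable_const _), integral_cpx_seg]
        simp
    _ ≤ p + c := by linarith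

theorem exists_measureReal_cpx_le_le (hU : UniversalPrefixFree U) :
    ∃ c : ℕ, ∀ (ν : Measure Cantor) [IsFiniteMeasure ν] (n b : ℕ) (δ : ℝ),
      (∀ Z, ν.real (PiNat.cylinder Z n) ≤ δ) →
        ν.real {Z | cpx U (seg Z n) ≤ cpxN U n + b} ≤ 2 ^ (b + c) * δ := by
  obtain ⟨c, hc⟩ := exists_card_le_of_cpx_le hU computable_numStr_length
  refine ⟨c, fun ν _ n b δ hδ => ?_⟩
  set A := {x ∈ (List.finite_length_eq Bool n).toFinset | cpx U x ≤ cpxN U n + b}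
  have hmem {x : BStr} : x ∈ A ↔ x.length = n ∧ cpx U x ≤ cpxN U n + b := by simp [A]
  have hcard : A.card ≤ 2 ^ (b + c) := hc (numStr n) b A fun x hx =>
    ⟨congrArg numStr (hmem.1 hx).1, (hmem.1 hx).2⟩
  have hδ_nonneg : 0 ≤ δ := measureReal_nonneg.trans (hδ fun _ => false)
  calc ν.real {Z | cpx U (seg Z n) ≤ cpxN U n + b} ≤ ν.real {Z | seg Z n ∈ A} :=
        measureReal_mono fun Z hZ => hmem.2 ⟨length_seg Z n, hZ⟩
    _ ≤ A.card * δ := measureReal_seg_mem_le ν hδ A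
    _ ≤ 2 ^ (b + c) * δ := mul_le_mul_of_nonneg_right (mod_cast hcard) hδ_nonneg

theorem eq_zero_of_frequently_avgCpx_le (hU : UniversalPrefixFree U) {μ ν : Measure Cantor}
    [IsProbabilityMeasure μ] [NullSingletonClass ν] (hνμ : ν ≤ μ) {p : ℝ}
    (hp : ∃ᶠ n in atTop, avgCpx U μ n ≤ cpxN U n + p) : ν = 0 := by
  have : IsFiniteMeasure ν := isFiniteMeasure_of_le μ hνμ
  obtain ⟨c, hhigh⟩ := exists_mul_measureReal_cpx_gt_le hU
  obtain ⟨d, hlow⟩ := exists_measureReal_cpx_le_le hU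
  suffices h : ∀ ε > 0, ν.real Set.univ ≤ ε by
    rw [← Measure.measure_univ_eq_zero, ← measureReal_eq_zero_iff]
    exact (le_of_forall_pos_le_add (by simpa using h)).antisymm measureReal_nonneg
  intro ε hε
  obtain ⟨b, hb⟩ := exists_nat_gt (max 0 ((p + c) / (ε / 2)))
  obtain ⟨hb_pos, hb⟩ := max_lt_iff.1 hb
  have hcyl := Metric.tendstoUniformly_iff.1 (tendstoUniformly_measureReal_cylinder ν)
    (ε / 2 / 2 ^ (b + d)) (by positivity)
  obtain ⟨n, hn, hcyl⟩ := (hp.and_eventually hcyl).exists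
  have hδ (Z : Cantor) : ν.real (PiNat.cylinder Z n) ≤ ε / 2 / 2 ^ (b + d) := by
    simpa [abs_of_nonneg measureReal_nonneg] using (hcyl Z).le
  have hν_low : ν.real {Z | cpx U (seg Z n) ≤ cpxN U n + b} ≤ ε / 2 := by
    simpa [mul_div_cancel₀] using hlow ν n b _ hδ
  have hν_high : ν.real {Z | cpxN U n + b < cpx U (seg Z n)} ≤ ε / 2 := by
    have hμ_high := hhigh μ n b p hn
    have hνμ_high := ENNReal.toReal_mono (measure_ne_top μ _)
      (hνμ {Z | cpxN U n + b < cpx U (seg Z n)})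
    rw [div_lt_iff₀ (by positivity)] at hb
    exact hνμ_high.trans (le_of_mul_le_mul_left (hμ_high.trans hb.le) hb_pos)
  calc ν.real Set.univ
      ≤ ν.real ({Z | cpx U (seg Z n) ≤ cpxN U n + b} ∪
          {Z | cpxN U n + b < cpx U (seg Z n)}) :=
        measureReal_mono fun Z _ => le_or_gt (cpx U (seg Z n)) _
    _ ≤ ε / 2 + ε / 2 := (measureReal_union_le _ _).trans (add_le_add hν_low hν_high)
    _ = ε := add_halves ε

theorem low_K_growth_implies_atomic_general (hU : UniversalPrefixFree U) (μ : Measure Cantor)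
    [IsProbabilityMeasure μ] {p : ℝ} (hp : ∃ᶠ n in atTop, avgCpx U μ n ≤ cpxN U n + p) :
    μ {Z | 0 < μ {Z}} = 1 := by
  set atoms := {Z | 0 < μ {Z}}
  have : NullSingletonClass (μ.restrict atomsᶜ) := ⟨fun Z => by
    rw [Measure.restrict_apply (measurableSet_singleton Z)]
    by_cases hZ : Z ∈ atoms
    · simp [hZ]
    · exact measure_mono_null Set.inter_subset_left (by simpa [atoms] using hZ)⟩
  have hzero : μ.restrict atomsᶜ = 0 :=
    eq_zero_of_frequently_avgCpx_le hU Measure.restrict_le_self hp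
  rw [measure_congr (ae_eq_univ.2 (Measure.restrict_eq_zero.1 hzero)), measure_univ]

end Atoms

/-- if there are `p` and infinitely many `n` with
`K(μ↾n) ≤ K(n) + p`, then `μ` is supported on its set of atoms. In
particular every K-trivial measure is supported on its atoms. -/
theorem low_K_growth_implies_atomic
    (UK : BStr →. BStr) (hUK : UniversalPrefixFree UK)
    (hlen : ∀ x : BStr, cpxN UK x.length ≤ cpx UK x)
    (μ : Measure Cantor) [IsProbabilityMeasure μ]
    (hp : ∃ p : ℕ, ∀ m : ℕ, ∃ n ≥ m, avgCpx UK μ n ≤ (cpxN UK n : ℝ) + (p : ℝ)) :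
    μ {Z : Cantor | 0 < μ {Z}} = 1 := by
  obtain ⟨p, hp⟩ := hp
  exact low_K_growth_implies_atomic_general hUK μ (frequently_atTop.2 hp)
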